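/- In every meadow, for every element x, if x³ = x then x = i(x). -/

import Mathlib

/-!
The equation `x ^ 3 = x` says that `x` is its own generalized inverse. Reflection turns the
restricted inverse law at `i x` into the second law of a generalized inverse, so `i x` is one as
well, and in a commutative semigroup there is at most one.
-/

/-- `y` is a generalized inverse of `x`, as in the theory of inverse semigroups. Both equations
are part of the notion: with the first alone, every element would be an inverse of `0`. -/
structure IsGeneralizedInverse {S : Type*} [Mul S] (x y : S) : Prop where
  mul_mul_eq_left : x * y * x = x
  mul_mul_eq_right : y * x * y = y

namespace IsGeneralizedInverse

theorem self_iff_pow_three_eq {M : Type*} [Monoid M] {x : M} :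
    IsGeneralizedInverse x x ↔ x ^ 3 = x := by
  rw [pow_three']
  exact ⟨mul_mul_eq_left, fun h => ⟨h, h⟩⟩

section CommSemigroup

variable {S : Type*} [CommSemigroup S]

theorem of_involutive {i : S → S} (hi : Function.Involutive i)
    (h : ∀ x, x * (x * i x) = x) (x : S) : IsGeneralizedInverse x (i x) where
  mul_mul_eq_left := by rw [mul_comm, h]
  mul_mul_eq_right := by
    rw [mul_comm]
    simpa only [hi x] using h (i x)

theorem eq_mul_mul_of_mul_mul_eq {x y z : S} (hy : y * x * y = y) (hz : x * z * x = x) :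
    y = y * x * z :=
  calc
    y = y * x * y := hy.symm
    _ = y * (x * z * x) * y := by rw [hz]
    _ = (y * x * y) * x * z := by ac_rfl
    _ = y * x * z := by rw [hy]

theorem unique {x y z : S} (hy : IsGeneralizedInverse x y) (hz : IsGeneralizedInverse x z) :
    y = z :=
  calc
    y = y * x * z := eq_mul_mul_of_mul_mul_eq hy.mul_mul_eq_right hz.mul_mul_eq_left
    _ = z * x * y := by ac_rfl
    _ = z := (eq_mul_mul_of_mul_mul_eq hz.mul_mul_eq_right hy.mul_mul_eq_left).symm

end CommSemigroup

end IsGeneralizedInverse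

theorem meadow_cube_self_inverse_general {M : Type*} [CommMonoid M] {x y : M}
    (hy : IsGeneralizedInverse x y) (hx : x ^ 3 = x) : x = y :=
  (IsGeneralizedInverse.self_iff_pow_three_eq.mpr hx).unique hy

theorem meadow_cube_self_inverse {R : Type*} [CommRing R] (i : R → R)
    (Ref : ∀ x : R, i (i x) = x)
    (Ril : ∀ x : R, x * (x * i x) = x) :
    ∀ x : R, x ^ 3 = x → x = i x := by
  intro x hx
  exact meadow_cube_self_inverse_general (.of_involutive Ref Ril x) hx
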